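/- Let x, y ∈ ℝ² with x ≠ y, where ℝ² carries the maximum metric d_m. Then there is a unique geodesic segment joining x to y in (ℝ², d_m) (i.e. any two unit-speed geodesics γ : [0, d_m(x,y)] → ℝ² with γ(0) = x and γ(d_m(x,y)) = y coincide) if and only if x and y lie on a common diagonal line L_{ε,a} for some ε ∈ {−1,1} and a ∈ ℝ. -/

import Mathlib

open MeasureTheory

/-- The `p`-Wasserstein distance between two measures, defined as the infimum over all
couplings `π` of `μ` and `ν` of `(∬ d(x,y)^p dπ)^(1/p)`. -/
noncomputable def Wdist {X : Type*} [MeasurableSpace X] [PseudoMetricSpace X] (p : ℝ)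
    (μ ν : Measure X) : ℝ :=
  (⨅ π ∈ {π : Measure (X × X) | π.map Prod.fst = μ ∧ π.map Prod.snd = ν},
    (∫⁻ q, edist q.1 q.2 ^ p ∂π) ^ (1 / p)).toReal

/-- The `p`-Wasserstein space over `X`: Borel probability measures on `X` with finite
`p`-th moment. -/
def WSet (X : Type*) [MeasurableSpace X] [PseudoMetricSpace X] (p : ℝ) : Set (Measure X) :=
  {μ | IsProbabilityMeasure μ ∧ ∃ x₀ : X, ∫⁻ x, edist x x₀ ^ p ∂μ < ⊤}

/-- An isometry of the underlying metric space: a distance-preserving bijection. -/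
def IsIsom {X : Type*} [PseudoMetricSpace X] (T : X → X) : Prop :=
  Function.Bijective T ∧ ∀ x y, dist (T x) (T y) = dist x y

/-- An isometry of the `p`-Wasserstein space over `X`: a bijection of the space of
probability measures with finite `p`-th moment preserving the Wasserstein distance. -/
def IsWIsometry (X : Type*) [MeasurableSpace X] [PseudoMetricSpace X] (p : ℝ)
    (Φ : Measure X → Measure X) : Prop :=
  Set.BijOn Φ (WSet X p) (WSet X p) ∧
    ∀ μ ∈ WSet X p, ∀ ν ∈ WSet X p, Wdist p (Φ μ) (Φ ν) = Wdist p μ ν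

/-- The (topological) support of a measure. -/
def msupport {X : Type*} [TopologicalSpace X] [MeasurableSpace X] (μ : Measure X) : Set X :=
  {x | ∀ U : Set X, IsOpen U → x ∈ U → μ U ≠ 0}

def diagLine (ε a : ℝ) : Set (ℝ × ℝ) := {z | z.2 = ε * z.1 + a}

def Lplus : Set (ℝ × ℝ) := {z | z.2 = z.1}

def Lminus : Set (ℝ × ℝ) := {z | z.2 = -z.1}

/-- The closed square `Q = [-1,1]²`. -/
abbrev Qs : Set (ℝ × ℝ) := Set.Icc (-1, -1) (1, 1)

def LplusQ : Set ↥Qs := {q | (q : ℝ × ℝ).2 = (q : ℝ × ℝ).1}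

def LminusQ : Set ↥Qs := {q | (q : ℝ × ℝ).2 = -(q : ℝ × ℝ).1}


/-- A unit-speed geodesic segment of length `T` in `(ℝ², d_m)`. -/
def IsPtGeo (T : ℝ) (γ : ℝ → ℝ × ℝ) : Prop :=
  ∀ s ∈ Set.Icc (0 : ℝ) T, ∀ t ∈ Set.Icc (0 : ℝ) T, dist (γ s) (γ t) = |s - t|

lemma aux_lip (D a k c s t : ℝ) (hc : 0 ≤ c) (h : |k| + c ≤ 1) :
    |(a + k * s + c * min s (D - s)) - (a + k * t + c * min t (D - t))| ≤ |s - t| := by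
  have h1 : |min s (D - s) - min t (D - t)| ≤ |s - t| := by
    have := abs_min_sub_min_le_max s (D - s) t (D - t)
    have h2 : |D - s - (D - t)| = |s - t| := by
      rw [show D - s - (D - t) = -(s - t) by ring, abs_neg]
    rw [h2, max_self] at this
    exact this
  calc |(a + k * s + c * min s (D - s)) - (a + k * t + c * min t (D - t))|
      = |k * (s - t) + c * (min s (D - s) - min t (D - t))| := by congr 1; ring
    _ ≤ |k * (s - t)| + |c * (min s (D - s) - min t (D - t))| := abs_add_le _ _
    _ = |k| * |s - t| + c * |min s (D - s) - min t (D - t)| := by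
        rw [abs_mul, abs_mul, abs_of_nonneg hc]
    _ ≤ |k| * |s - t| + c * |s - t| := by gcongr
    _ = (|k| + c) * |s - t| := by ring
    _ ≤ 1 * |s - t| := by gcongr
    _ = |s - t| := one_mul _

lemma aux_exists (a b u v : ℝ) (h : |u - v| < |a - b|) :
    ∃ f g₁ g₂ : ℝ → ℝ, (∀ s t, |f s - f t| = |s - t|) ∧
      (∀ s t, |g₁ s - g₁ t| ≤ |s - t|) ∧ (∀ s t, |g₂ s - g₂ t| ≤ |s - t|) ∧
      f 0 = a ∧ f |a - b| = b ∧ g₁ 0 = u ∧ g₁ |a - b| = v ∧ g₂ 0 = u ∧ g₂ |a - b| = v ∧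
      g₁ (|a - b| / 2) ≠ g₂ (|a - b| / 2) := by
  obtain ⟨D, hD⟩ : ∃ D, D = |a - b| := ⟨_, rfl⟩
  have hDpos : 0 < D := by rw [hD]; exact lt_of_le_of_lt (abs_nonneg _) h
  obtain ⟨σ, hσ, hσ2⟩ : ∃ σ : ℝ, |σ| = 1 ∧ a + σ * D = b := by
    rcases abs_cases (a - b) with h' | h'
    · exact ⟨-1, by simp, by rw [hD, h'.1]; ring⟩
    · exact ⟨1, by simp, by rw [hD, h'.1]; ring⟩
  rw [← hD] at h ⊢
  have hk : |(v - u) / D| < 1 := by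
    rw [abs_div, abs_of_pos hDpos, div_lt_one hDpos, abs_sub_comm]; exact h
  have hkD : (v - u) / D * D = v - u := by field_simp
  set k := (v - u) / D
  refine ⟨fun t => a + σ * t, fun t => u + k * t + 0 * min t (D - t),
    fun t => u + k * t + (1 - |k|) * min t (D - t), ?_, ?_, ?_, ?_, ?_, ?_, ?_, ?_, ?_, ?_⟩
  · intro s t
    rw [show a + σ * s - (a + σ * t) = σ * (s - t) by ring, abs_mul, hσ, one_mul]
  · intro s t
    exact aux_lip D u k 0 s t le_rfl (by linarith)
  · intro s t
    exact aux_lip D u k _ s t (by linarith) (by linarith)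
  · simp
  · exact hσ2
  · simp
  · simp [hkD]
  · simp [hDpos.le]
  · simp [hkD, hDpos.le]
  · have : min (D / 2) (D - D / 2) = D / 2 := by rw [min_eq_left]; linarith
    simp only [this]
    intro hh
    have : 0 < (1 - |k|) * (D / 2) := mul_pos (by linarith) (by linarith)
    linarith

lemma aux_det (a b p q t D : ℝ) (hD : |a - b| = D)
    (h1 : |a - p| ≤ t) (h2 : |p - b| ≤ D - t) (h3 : |a - q| ≤ t) (h4 : |q - b| ≤ D - t) :
    p = q := by
  rw [abs_le] at *
  rcases abs_cases (a - b) with h' | h' <;> linarith [h1.1, h1.2, h2.1, h2.2, h3.1, h3.2, h4.1, h4.2]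

/-- Two distinct points of `(ℝ², d_m)` are joined by a unique geodesic segment if and
only if they lie on a common diagonal line. -/
theorem unique_geodesic_iff_common_diagonal (x y : ℝ × ℝ) (hxy : x ≠ y) :
    (∀ γ₁ γ₂ : ℝ → ℝ × ℝ,
      IsPtGeo (dist x y) γ₁ → γ₁ 0 = x → γ₁ (dist x y) = y →
      IsPtGeo (dist x y) γ₂ → γ₂ 0 = x → γ₂ (dist x y) = y →
      ∀ t ∈ Set.Icc (0 : ℝ) (dist x y), γ₁ t = γ₂ t) ↔
    (∃ ε a : ℝ, (ε = 1 ∨ ε = -1) ∧ x ∈ diagLine ε a ∧ y ∈ diagLine ε a) := by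
  have hcoord : ∀ p q : ℝ × ℝ, dist p q = max |p.1 - q.1| |p.2 - q.2| := fun p q => by
    rw [Prod.dist_eq, Real.dist_eq, Real.dist_eq]
  constructor
  · intro H
    by_contra hne
    rcases lt_trichotomy |x.2 - y.2| |x.1 - y.1| with h | h | h
    · obtain ⟨f, g₁, g₂, hf, hg₁, hg₂, e1, e2, e3, e4, e5, e6, e7⟩ := aux_exists _ _ _ _ h
      have hd : dist x y = |x.1 - y.1| := by rw [hcoord, max_eq_left h.le]
      rw [hd] at H
      have := H (fun t => (f t, g₁ t)) (fun t => (f t, g₂ t))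
        (fun s _ t _ => by rw [hcoord]; simp only [hf]; exact max_eq_left (hg₁ s t))
        (Prod.ext e1 e3) (Prod.ext e2 e4)
        (fun s _ t _ => by rw [hcoord]; simp only [hf]; exact max_eq_left (hg₂ s t))
        (Prod.ext e1 e5) (Prod.ext e2 e6) (|x.1 - y.1| / 2)
        ⟨by positivity, by linarith [abs_nonneg (x.1 - y.1)]⟩
      exact e7 (congrArg Prod.snd this)
    · apply hne
      rcases abs_eq_abs.mp h with h | h
      · exact ⟨1, x.2 - x.1, Or.inl rfl, by simp [diagLine], by
          simp only [diagLine, Set.mem_setOf_eq]; linarith⟩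
      · exact ⟨-1, x.2 + x.1, Or.inr rfl, by simp [diagLine], by
          simp only [diagLine, Set.mem_setOf_eq]; linarith⟩
    · obtain ⟨f, g₁, g₂, hf, hg₁, hg₂, e1, e2, e3, e4, e5, e6, e7⟩ := aux_exists _ _ _ _ h
      have hd : dist x y = |x.2 - y.2| := by rw [hcoord, max_eq_right h.le]
      rw [hd] at H
      have := H (fun t => (g₁ t, f t)) (fun t => (g₂ t, f t))
        (fun s _ t _ => by rw [hcoord]; simp only [hf]; exact max_eq_right (hg₁ s t))
        (Prod.ext e3 e1) (Prod.ext e4 e2)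
        (fun s _ t _ => by rw [hcoord]; simp only [hf]; exact max_eq_right (hg₂ s t))
        (Prod.ext e5 e1) (Prod.ext e6 e2) (|x.2 - y.2| / 2)
        ⟨by positivity, by linarith [abs_nonneg (x.2 - y.2)]⟩
      exact e7 (congrArg Prod.fst this)
  · rintro ⟨ε, a, hε, hx, hy⟩ γ₁ γ₂ h1 h10 h1D h2 h20 h2D t ht
    simp only [diagLine, Set.mem_setOf_eq] at hx hy
    have heq : |x.2 - y.2| = |x.1 - y.1| := by
      rw [hx, hy, show ε * x.1 + a - (ε * y.1 + a) = ε * (x.1 - y.1) by ring, abs_mul]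
      rcases hε with h | h <;> simp [h]
    have hd1 : |x.1 - y.1| = dist x y := by rw [hcoord, heq, max_self]
    have hd2 : |x.2 - y.2| = dist x y := by rw [heq, hd1]
    have key : ∀ γ : ℝ → ℝ × ℝ, IsPtGeo (dist x y) γ → γ 0 = x → γ (dist x y) = y →
        (|x.1 - (γ t).1| ≤ t ∧ |x.2 - (γ t).2| ≤ t) ∧
        (|(γ t).1 - y.1| ≤ dist x y - t ∧ |(γ t).2 - y.2| ≤ dist x y - t) := by
      intro γ h h0 hD
      have u := h 0 ⟨le_rfl, dist_nonneg⟩ t ht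
      have v := h t ht (dist x y) ⟨dist_nonneg, le_rfl⟩
      rw [h0, zero_sub, abs_neg, abs_of_nonneg ht.1, hcoord] at u
      rw [hD, abs_sub_comm, abs_of_nonneg (sub_nonneg.mpr ht.2), hcoord (γ t) y] at v
      exact ⟨max_le_iff.mp u.le, max_le_iff.mp v.le⟩
    obtain ⟨⟨a1, a2⟩, a3, a4⟩ := key γ₁ h1 h10 h1D
    obtain ⟨⟨b1, b2⟩, b3, b4⟩ := key γ₂ h2 h20 h2D
    exact Prod.ext (aux_det _ _ _ _ t _ hd1 a1 a3 b1 b3) (aux_det _ _ _ _ t _ hd2 a2 a4 b2 b4)
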